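/- Let k ≥ 1 be an integer and let x assign a nonnegative value x_P to every rooted path P such that Σ_{P : v ∈ P} x_P ≥ 1 for every v ∈ V and Σ_P x_P ≤ k + 1/3. Set ν = Σ_P c^reg(P)·x_P. Then there exist at most k rooted paths whose union covers all of V and whose total regret is at most (18k + 16)·ν. -/

import Mathlib

/-!
Regret is measured by the directed step costs `regCost c D u v = c u v + D u - D v`, which are
nonnegative and satisfy the triangle inequality, so deleting nodes from a path never increases its
regret. Closed walks have the same cost under `regCost c D` as under `c`.

Each fractional path is cut into blocks at increasing distances from the root. A finest such cutting
has total `c`-cost at most `3/2` times the regret of the path (`exists_blocks`), because inside a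
block every level is crossed three times. Put `δ = (k + 1/3) / (k + 2/3)`. A set of nodes is active
if each of its nodes is covered with weight less than `δ` by blocks contained in the set; then the
blocks, scaled by `1 / (1 - δ)`, cross its boundary with weight at least one. Kruskal merging of
active sets, analysed by dual fitting (`exists_partition_tours`), partitions the nodes into inactive
parts carrying closed tours of total cost at most `4 / (1 - δ) * (3/2) * ν = 18 (k + 2/3) ν`.

An inactive part has a witness that is covered with weight at least `δ` by blocks inside the part.
Keeping from each path only the witnesses covered by its blocks in this way leaves lists increasing
in distance from the root (`exists_witness_list`). Scaled by `1 / δ` they cover every witness at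
least once and have total weight at most `k + 2/3`. As the steps increase the distance, the
resulting flow is acyclic, and it is rounded to `k` integral paths through all witnesses of regret
at most `3 ν / δ ≤ 4 ν` (`exists_integral_paths`, by Birkhoff's theorem). Splicing in the tours at
the witnesses gives `k` paths through all nodes, of total regret at most
`(18 (k + 2/3) + 4) ν = (18 k + 16) ν`.
-/

/-- Total cost of traversing the list of nodes in order. -/
def pathCost {α : Type*} (c : α → α → ℝ) : List α → ℝ
  | [] => 0
  | [_] => 0
  | a :: b :: l => c a b + pathCost c (b :: l)

/-- A rooted path: a list of distinct nodes starting at the root `r`. -/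
def IsRootedPath {α : Type*} (r : α) (w : List α) : Prop :=
  w.head? = some r ∧ w.Nodup

/-- The regret of a rooted path: its cost minus the distance from `r` to its last node. -/
def pathRegret {α : Type*} (c : α → α → ℝ) (r : α) (w : List α) : ℝ :=
  pathCost c w - c r (w.getLastD r)

/-! ### Costs of lists of nodes -/

section PathCost

variable {β : Type*}

lemma pathCost_nonneg {c : β → β → ℝ} (hnn : ∀ u v, 0 ≤ c u v) : ∀ l, 0 ≤ pathCost c l
  | [] => le_rfl
  | [_] => le_rfl
  | a :: b :: l => add_nonneg (hnn a b) (pathCost_nonneg hnn (b :: l))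

lemma pathCost_append_cons (c : β → β → ℝ) (a : β) (s : List β) :
    ∀ p, pathCost c (p ++ a :: s) = pathCost c (p ++ [a]) + pathCost c (a :: s)
  | [] => by simp [pathCost]
  | [x] => by simp [pathCost]
  | x :: y :: p => by
      have := pathCost_append_cons c a s (y :: p)
      simp only [List.cons_append, pathCost] at this ⊢
      rw [this]; ring

lemma pathCost_cons_cons (c : β → β → ℝ) (a b : β) (l : List β) :
    pathCost c (a :: b :: l) = c a b + pathCost c (b :: l) := rfl

lemma pathCost_le_cons {c : β → β → ℝ} (hnn : ∀ u v, 0 ≤ c u v) (a : β) (l : List β) :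
    pathCost c l ≤ pathCost c (a :: l) := by
  cases l with
  | nil => simp [pathCost]
  | cons b l => rw [pathCost_cons_cons]; linarith [hnn a b]

lemma pathCost_cons_sublist {c : β → β → ℝ} (hnn : ∀ u v, 0 ≤ c u v)
    (htri : ∀ u v w, c u v ≤ c u w + c w v) {l' l : List β} (h : l'.Sublist l) :
    ∀ a, pathCost c (a :: l') ≤ pathCost c (a :: l) := by
  induction h with
  | slnil => intro a; exact le_rfl
  | @cons l₁ l₂ x h ih =>
    intro a
    refine (ih a).trans ?_
    cases l₂ with
    | nil => simpa [pathCost] using hnn a x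
    | cons y l₂ => simp only [pathCost_cons_cons]; linarith [htri a y x]
  | @cons_cons l₁ l₂ x h ih =>
    intro a
    simp only [pathCost_cons_cons]
    linarith [ih x]

lemma pathCost_sublist {c : β → β → ℝ} (hnn : ∀ u v, 0 ≤ c u v)
    (htri : ∀ u v w, c u v ≤ c u w + c w v) {l' l : List β} (h : l'.Sublist l) :
    pathCost c l' ≤ pathCost c l := by
  induction h with
  | slnil => exact le_rfl
  | @cons l₁ l₂ x h ih => exact ih.trans (pathCost_le_cons hnn x _)
  | @cons_cons l₁ l₂ x h ih => exact pathCost_cons_sublist hnn htri h x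

lemma pathCost_append_ge {c : β → β → ℝ} (hnn : ∀ u v, 0 ≤ c u v) (s : List β) :
    ∀ p, pathCost c p + pathCost c s ≤ pathCost c (p ++ s)
  | [] => by simp [pathCost]
  | [x] => by simpa [pathCost] using pathCost_le_cons hnn x s
  | x :: y :: p => by
      have := pathCost_append_ge hnn s (y :: p)
      simp only [List.cons_append, pathCost] at this ⊢
      linarith

lemma pathCost_map {γ : Type*} (c : β → β → ℝ) (f : γ → β) :
    ∀ l, pathCost c (l.map f) = pathCost (fun u v => c (f u) (f v)) l
  | [] => rfl
  | [_] => rfl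
  | a :: b :: l => by
      have := pathCost_map c f (b :: l)
      simp only [List.map_cons, pathCost] at this ⊢
      rw [this]

/-- The directed regret cost of the step `u → v`: the amount by which the step exceeds the gain
`D v - D u` in distance from the root. -/
def regCost (c : β → β → ℝ) (D : β → ℝ) (u v : β) : ℝ := c u v + D u - D v

lemma pathCost_regCost (c : β → β → ℝ) (D : β → ℝ) (l : List β) :
    ∀ a, pathCost (regCost c D) (a :: l) = pathCost c (a :: l) + D a - D (l.getLastD a) := by
  induction l with
  | nil => intro a; simp [pathCost]
  | cons b l ih =>
    intro a
    rw [pathCost_cons_cons, pathCost_cons_cons, ih b, List.getLastD_cons, regCost]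
    ring

/-- Replacing each entry of a list by a closed walk based at it raises the cost by at most the
total cost of the closed walks. -/
lemma pathCost_flatMap {γ : Type*} (c : β → β → ℝ) (f : γ → β) (t : γ → List β) (h : γ → ℝ)
    (ht1 : ∀ w, (t w).head? = some (f w)) (ht2 : ∀ w, (t w).getLast? = some (f w))
    (htc : ∀ w, pathCost c (t w) ≤ h w) (l : List γ) :
    pathCost c (l.flatMap t) ≤ pathCost c (l.map f) + (l.map h).sum := by
  have key : ∀ w : γ, ∀ s : List β,
      pathCost c (t w ++ s) = pathCost c (t w) + pathCost c (f w :: s) := by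
    intro w s
    obtain ⟨q, hq⟩ := List.getLast?_eq_some_iff.1 (ht2 w)
    rw [hq, List.append_assoc]
    exact pathCost_append_cons c (f w) s q
  have aux : ∀ (l : List γ) (a : β), pathCost c (a :: l.flatMap t)
      ≤ pathCost c (a :: l.map f) + (l.map h).sum := by
    intro l
    induction l with
    | nil => intro a; simp [pathCost]
    | cons w l ih =>
      intro a
      obtain ⟨q, hq⟩ := List.head?_eq_some_iff.1 (ht1 w)
      have h1 : pathCost c (a :: (w :: l).flatMap t)
          = c a (f w) + pathCost c (t w ++ l.flatMap t) := by
        rw [List.flatMap_cons, hq]; rfl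
      rw [h1, key, List.map_cons, List.map_cons, List.sum_cons, pathCost_cons_cons]
      linarith [ih (f w), htc w]
  cases l with
  | nil => simp [pathCost]
  | cons w l =>
    rw [List.flatMap_cons, key, List.map_cons, List.map_cons, List.sum_cons]
    linarith [aux l (f w), htc w]

end PathCost

/-! ### Step counts -/

section Adj

variable {β : Type*} [DecidableEq β]

/-- `adj l u v` is the number of times `v` immediately follows `u` in the list `l`. -/
def adj : List β → β → β → ℝ
  | [], _, _ => 0
  | [_], _, _ => 0
  | a :: b :: l, u, v => (if a = u ∧ b = v then 1 else 0) + adj (b :: l) u v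

lemma adj_nonneg (u v : β) : ∀ l, 0 ≤ adj l u v
  | [] => le_rfl
  | [_] => le_rfl
  | a :: b :: l => add_nonneg (by split_ifs <;> norm_num) (adj_nonneg u v (b :: l))

lemma pathCost_eq_adj [Fintype β] (h : β → β → ℝ) :
    ∀ l, pathCost h l = ∑ u, ∑ v, adj l u v * h u v
  | [] => by simp [pathCost, adj]
  | [_] => by simp [pathCost, adj]
  | a :: b :: l => by
      have := pathCost_eq_adj h (b :: l)
      simp only [pathCost, adj, add_mul, Finset.sum_add_distrib, ← this]
      simp [ite_and]

lemma sum_adj_right [Fintype β] [BEq β] [LawfulBEq β] (u : β) :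
    ∀ l, ∑ v, adj l u v = (l.dropLast.count u : ℝ)
  | [] => by simp [adj]
  | [_] => by simp [adj]
  | a :: b :: l => by
      have := sum_adj_right u (b :: l)
      simp only [adj, Finset.sum_add_distrib, this, List.dropLast_cons_cons, List.count_cons]
      simp [ite_and, add_comm]

lemma sum_adj_left [Fintype β] [BEq β] [LawfulBEq β] (v : β) :
    ∀ l, ∑ u, adj l u v = (l.tail.count v : ℝ)
  | [] => by simp [adj]
  | [_] => by simp [adj]
  | a :: b :: l => by
      have := sum_adj_left v (b :: l)
      simp only [adj, Finset.sum_add_distrib, this, List.tail_cons, List.count_cons]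
      simp [ite_and, add_comm]

lemma adj_eq_zero {R : β → β → Prop} {u v : β} (huv : ¬ R u v) :
    ∀ l : List β, l.Pairwise R → adj l u v = 0
  | [], _ => rfl
  | [_], _ => rfl
  | a :: b :: l, h => by
      have h1 := adj_eq_zero huv (b :: l) (List.pairwise_cons.1 h).2
      have h2 : ¬ (a = u ∧ b = v) := by
        rintro ⟨rfl, rfl⟩
        exact huv ((List.pairwise_cons.1 h).1 _ (by simp))
      simp [adj, h1, h2]

/-- The list with the extra symbol `none` added at both ends: it stands for the root before the
first node and for a common sink after the last one. -/
def withEnds (l : List β) : List (Option β) := none :: (l.map some ++ [none])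

lemma adj_withEnds_some (u v : β) (l : List β) : adj (withEnds l) (some u) (some v) = adj l u v := by
  have aux : ∀ l : List β, adj (l.map some ++ [none]) (some u) (some v) = adj l u v := by
    intro l
    induction l with
    | nil => simp [adj]
    | cons a l ih =>
      cases l with
      | nil => simp [adj]
      | cons b l =>
        simp only [List.map_cons, List.cons_append, adj] at ih ⊢
        rw [ih]; simp
  unfold withEnds
  cases l with
  | nil => simp [adj]
  | cons a l =>
    have := aux (a :: l)
    simp only [List.map_cons, List.cons_append, adj] at this ⊢
    rw [this]; simp

omit [DecidableEq β] in
lemma dropLast_withEnds (l : List β) : (withEnds l).dropLast = none :: l.map some := by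
  unfold withEnds
  rw [← List.cons_append, List.dropLast_concat]

end Adj

/-! ### Rounding a flow to integral paths -/

section Flow

/-- Any family of lists covering every node with weight at least one can be thinned out, by
deleting nodes, so that every node of `s` is covered with weight exactly one and the others still
with weight at least one. A node `v` of coverage
`C ≥ 1` is handled by splitting each list into a copy of weight fraction `1/C` that keeps `v` and a
copy of weight fraction `1 - 1/C` from which `v` is deleted. -/
lemma exists_exact_cover {β : Type*} [Fintype β] [DecidableEq β] {R : β → β → Prop}
    {g : β → β → ℝ} (hnn : ∀ u v, 0 ≤ g u v) (htri : ∀ u v w, g u v ≤ g u w + g w v)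
    {ι : Type} [Fintype ι] (x : ι → ℝ) (hx : ∀ i, 0 ≤ x i) (L : ι → List β)
    (hL : ∀ i, (L i).Pairwise R)
    (hcov : ∀ v, 1 ≤ ∑ i, if v ∈ L i then x i else 0) (s : Finset β) :
    ∃ (κ : Type) (_ : Fintype κ) (y : κ → ℝ) (M : κ → List β), (∀ i, 0 ≤ y i) ∧
      (∀ i, (M i).Pairwise R) ∧ (∀ v, 1 ≤ ∑ i, if v ∈ M i then y i else 0) ∧
      (∀ v ∈ s, ∑ i, (if v ∈ M i then y i else 0) = 1) ∧ ∑ i, y i = ∑ i, x i ∧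
      ∑ i, y i * pathCost g (M i) ≤ ∑ i, x i * pathCost g (L i) := by
  induction s using Finset.induction_on with
  | empty => exact ⟨ι, inferInstance, x, L, hx, hL, hcov, by simp, rfl, le_rfl⟩
  | insert v s hv ih =>
    obtain ⟨κ, _, y, M, hy, hM, hc, hs, ht, hg⟩ := ih
    set C := ∑ i, if v ∈ M i then y i else 0 with hC
    have hC1 : 1 ≤ C := hc v
    have hC0 : 0 < C := by linarith
    have hq0 : 0 ≤ C⁻¹ := by positivity
    have hq1 : C⁻¹ ≤ 1 := inv_le_one_of_one_le₀ hC1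
    have hother : ∀ u, u ≠ v →
        (∑ i, if u ∈ M i then C⁻¹ * y i else 0)
          + (∑ i, if u ∈ (M i).filter (fun z => decide (z ≠ v)) then (1 - C⁻¹) * y i else 0)
        = ∑ i, if u ∈ M i then y i else 0 := by
      intro u hu
      rw [← Finset.sum_add_distrib]
      refine Finset.sum_congr rfl fun i _ => ?_
      simp only [List.mem_filter, decide_eq_true_eq, hu, ne_eq, not_false_eq_true, and_true]
      split_ifs <;> ring
    have hself : (∑ i, if v ∈ M i then C⁻¹ * y i else 0)
          + (∑ i, if v ∈ (M i).filter (fun z => decide (z ≠ v)) then (1 - C⁻¹) * y i else 0)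
        = 1 := by
      have h1 : (∑ i, if v ∈ M i then C⁻¹ * y i else 0) = C⁻¹ * C := by
        rw [hC, Finset.mul_sum]
        refine Finset.sum_congr rfl fun i _ => ?_
        split_ifs <;> simp
      rw [h1]
      simp [hC0.ne']
    refine ⟨κ ⊕ κ, inferInstance,
      Sum.elim (fun i => C⁻¹ * y i) (fun i => (1 - C⁻¹) * y i),
      Sum.elim M (fun i => (M i).filter (fun z => decide (z ≠ v))), ?_, ?_, ?_, ?_, ?_, ?_⟩
    · rintro (i | i)
      · exact mul_nonneg hq0 (hy i)
      · exact mul_nonneg (by linarith) (hy i)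
    · rintro (i | i)
      · exact hM i
      · exact (hM i).sublist List.filter_sublist
    · intro u
      rw [Fintype.sum_sum_type]
      by_cases hu : u = v
      · subst hu; exact hself.ge
      · exact (hc u).trans_eq (hother u hu).symm
    · intro u hus
      rw [Fintype.sum_sum_type]
      by_cases hu : u = v
      · subst hu; exact hself
      · exact (hother u hu).trans (hs u ((Finset.mem_insert.1 hus).resolve_left hu))
    · simp only [Fintype.sum_sum_type, Sum.elim_inl, Sum.elim_inr]
      rw [← Finset.mul_sum, ← Finset.mul_sum, ht]; ring
    · simp only [Fintype.sum_sum_type, Sum.elim_inl, Sum.elim_inr]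
      refine le_trans ?_ hg
      rw [← Finset.sum_add_distrib]
      refine Finset.sum_le_sum fun i _ => ?_
      have h1 : pathCost g ((M i).filter (fun z => decide (z ≠ v))) ≤ pathCost g (M i) :=
        pathCost_sublist hnn htri List.filter_sublist
      have h2 : 0 ≤ (1 - C⁻¹) * y i := mul_nonneg (by linarith) (hy i)
      nlinarith [mul_le_mul_of_nonneg_left h1 h2]

/-- The place where the path with index `j` currently ends: its last node, or its (root) index if
it is still empty. -/
def endOf {β κ : Type*} (j : κ) (l : List β) : β ⊕ κ :=
  match l.getLast? with
  | none => Sum.inr j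
  | some u => Sum.inl u

/-- The cost of the step into `v` from its predecessor; steps out of a root are free. -/
def stepCost {β κ : Type*} (g : β → β → ℝ) (v : β) : β ⊕ κ → ℝ
  | Sum.inl u => g u v
  | Sum.inr _ => 0

lemma pathCost_concat {β κ : Type*} (g : β → β → ℝ) (v : β) (j : κ) (l : List β) :
    pathCost g (l ++ [v]) = pathCost g l + stepCost g v (endOf j l) := by
  rcases l.eq_nil_or_concat with rfl | ⟨p, u, rfl⟩
  · simp [pathCost, endOf, stepCost]
  · rw [List.concat_eq_append, List.append_assoc, List.singleton_append, pathCost_append_cons]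
    simp [endOf, stepCost, pathCost]

/-- An injective, `D`-increasing assignment of predecessors (other nodes, or roots indexed by `κ`)
is realised by a family of paths indexed by `κ` that partition the nodes. The paths are built by
appending the nodes in order of increasing `D`; the invariant is that every node or root that is
not yet a predecessor is the current end of some path. The sums over arbitrary `h` express that
every node occurs exactly once. -/
lemma exists_paths_of_pred {β κ : Type*} [Fintype β] [DecidableEq β] [Fintype κ] [DecidableEq κ]
    (D : β → ℝ) (g : β → β → ℝ) (pr : β → β ⊕ κ) (hinj : Function.Injective pr)
    (hD : ∀ u v, pr v = Sum.inl u → D u < D v) :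
    ∃ Q : κ → List β, (∀ v, ∃ j, v ∈ Q j) ∧
      ∑ j, pathCost g (Q j) = ∑ v, stepCost g v (pr v) ∧
      ∀ h : β → ℝ, ∑ j, ((Q j).map h).sum = ∑ v, h v := by
  have key : ∀ s : Finset β, (∀ v ∈ s, ∀ u, pr v = Sum.inl u → u ∈ s) →
      ∃ Q : κ → List β, (∀ v ∈ s, ∃ j, v ∈ Q j) ∧
      ∑ j, pathCost g (Q j) = ∑ v ∈ s, stepCost g v (pr v) ∧
      (∀ h : β → ℝ, ∑ j, ((Q j).map h).sum = ∑ v ∈ s, h v) ∧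
      ∀ a : β ⊕ κ, (∀ u, a = Sum.inl u → u ∈ s) → (∀ v ∈ s, pr v ≠ a) →
        ∃ j, endOf j (Q j) = a := by
    intro s
    induction s using Finset.induction_on_max_value D with
    | empty =>
      intro _
      refine ⟨fun _ => [], by simp, by simp [pathCost], by simp, ?_⟩
      rintro (u | j) h1 _
      · simpa using h1 u rfl
      · exact ⟨j, rfl⟩
    | insert v s hv hmax ih =>
      intro hcl
      obtain ⟨Q, hQ1, hQ2, hQ3, hQ4⟩ := ih (by
        intro v' hv' u hu
        refine (Finset.mem_insert.1 (hcl v' (Finset.mem_insert_of_mem hv') u hu)).resolve_left ?_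
        rintro rfl
        exact absurd (hD _ _ hu) (not_lt.2 (hmax v' hv')))
      obtain ⟨j, hj⟩ := hQ4 (pr v) (by
        intro u hu
        refine (Finset.mem_insert.1 (hcl v (Finset.mem_insert_self _ _) u hu)).resolve_left ?_
        rintro rfl
        exact lt_irrefl _ (hD _ _ hu)) (by
        intro v' hv' h
        exact hv (hinj h ▸ hv'))
      have hsum : ∀ (F : List β → ℝ) (e : ℝ), F (Q j ++ [v]) = F (Q j) + e →
          ∑ i, F (Function.update Q j (Q j ++ [v]) i) = e + ∑ i, F (Q i) := by
        intro F e he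
        rw [← Finset.add_sum_erase _ _ (Finset.mem_univ j),
          ← Finset.add_sum_erase _ (fun i => F (Q i)) (Finset.mem_univ j)]
        rw [Function.update_self, he]
        rw [Finset.sum_congr rfl (g := fun i => F (Q i))]
        · ring
        · intro i hi
          rw [Function.update_of_ne (Finset.ne_of_mem_erase hi)]
      refine ⟨Function.update Q j (Q j ++ [v]), ?_, ?_, ?_, ?_⟩
      · intro u hu
        rcases Finset.mem_insert.1 hu with rfl | hu
        · exact ⟨j, by simp⟩
        · obtain ⟨i, hi⟩ := hQ1 u hu
          refine ⟨i, ?_⟩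
          by_cases hij : i = j
          · subst hij; simp [hi]
          · rwa [Function.update_of_ne hij]
      · rw [hsum _ _ (pathCost_concat g v j (Q j)), Finset.sum_insert hv, hQ2, hj]
      · intro h
        rw [hsum (fun l => (l.map h).sum) (h v) (by simp), Finset.sum_insert hv, hQ3]
      · intro a ha1 ha2
        by_cases hav : a = Sum.inl v
        · exact ⟨j, by simp [endOf, hav]⟩
        · obtain ⟨i, hi⟩ := hQ4 a (by
            intro u hu
            refine (Finset.mem_insert.1 (ha1 u hu)).resolve_left ?_
            rintro rfl
            exact hav hu) (fun v' hv' => ha2 v' (Finset.mem_insert_of_mem hv'))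
          refine ⟨i, ?_⟩
          have hij : i ≠ j := by
            rintro rfl
            exact ha2 v (Finset.mem_insert_self _ _) (hj.symm.trans hi)
          rwa [Function.update_of_ne hij]
  obtain ⟨Q, h1, h2, h3, _⟩ := key Finset.univ (by simp)
  exact ⟨Q, fun v => h1 v (Finset.mem_univ v), h2, h3⟩

/-- Integral rounding of a unit-coverage family of increasing lists of total weight at most
`k + 2/3` to `k` paths, at a threefold increase of the cost.

The roots and sinks are split into `k + 1` copies, the last of them (`none`) carrying weight only
`2/3`; matching the last root copy directly to the last sink copy with weight `1/3` makes the
matrix of steps doubly stochastic. By Birkhoff it is a convex combination of permutations, and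
those matching the last root copy to the last sink copy have total weight at least `1/3`; they use
only `k` paths. The last clause says that every node lies on exactly one path. -/
lemma exists_integral_paths {β : Type*} [Fintype β] [DecidableEq β] (D : β → ℝ)
    {g : β → β → ℝ} (hnn : ∀ u v, 0 ≤ g u v) (k : ℕ)
    {ι : Type} [Fintype ι] (x : ι → ℝ) (hx : ∀ i, 0 ≤ x i) (L : ι → List β)
    (hL : ∀ i, (L i).Pairwise (fun u v => D u < D v))
    (hcov : ∀ v, ∑ i, (if v ∈ L i then x i else 0) = 1)
    (htot : ∑ i, x i ≤ (k : ℝ) + 2 / 3) :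
    ∃ Q : Fin k → List β, (∀ v, ∃ j, v ∈ Q j) ∧
      ∑ j, pathCost g (Q j) ≤ 3 * ∑ i, x i * pathCost g (L i) ∧
      ∀ h : β → ℝ, ∑ j, ((Q j).map h).sum = ∑ v, h v := by
  have hk0 : (0 : ℝ) < (k : ℝ) + 2 / 3 := by positivity
  -- `y` is the flow on single steps, with `none` for the root and for the sink.
  set y : Option β → Option β → ℝ := fun a b => ∑ i, x i * adj (withEnds (L i)) a b with hy
  have hy0 : ∀ a b, 0 ≤ y a b := fun a b =>
    Finset.sum_nonneg fun i _ => mul_nonneg (hx i) (adj_nonneg _ _ _)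
  have hnd : ∀ i, (L i).Nodup := fun i => (hL i).imp (fun h e => by rw [e] at h; exact lt_irrefl _ h)
  have hcount : ∀ v i, (((L i).map some).count (some v) : ℝ) = if v ∈ L i then 1 else 0 := by
    intro v i
    rw [List.count_map_of_injective _ _ (Option.some_injective β), (hnd i).count]
    split_ifs <;> simp
  have hnone : ∀ i, ((L i).map some).count none = 0 := fun i =>
    List.count_eq_zero_of_not_mem (by simp)
  have hrow : ∀ a, ∑ b, y a b = ∑ i, x i * ((none :: (L i).map some).count a : ℝ) := by
    intro a
    simp only [hy]
    rw [Finset.sum_comm]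
    refine Finset.sum_congr rfl fun i _ => ?_
    rw [← Finset.mul_sum, sum_adj_right, dropLast_withEnds]
  have hcol : ∀ b, ∑ a, y a b = ∑ i, x i * (((L i).map some ++ [none]).count b : ℝ) := by
    intro b
    simp only [hy]
    rw [Finset.sum_comm]
    refine Finset.sum_congr rfl fun i _ => ?_
    rw [← Finset.mul_sum, sum_adj_left, withEnds, List.tail_cons]
  have hrow_some : ∀ v, ∑ b, y (some v) b = 1 := by
    intro v
    rw [hrow, ← hcov v]
    refine Finset.sum_congr rfl fun i _ => ?_
    rw [List.count_cons_of_ne (by simp), hcount]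
    split_ifs <;> simp
  have hcol_some : ∀ v, ∑ a, y a (some v) = 1 := by
    intro v
    rw [hcol, ← hcov v]
    refine Finset.sum_congr rfl fun i _ => ?_
    rw [List.count_append, List.count_singleton]
    simp [hcount]
  have hrow_none : ∑ b, y none b = ∑ i, x i := by
    rw [hrow]
    refine Finset.sum_congr rfl fun i _ => ?_
    rw [List.count_cons_self, hnone]; simp
  have hcol_none : ∑ a, y a none = ∑ i, x i := by
    rw [hcol]
    refine Finset.sum_congr rfl fun i _ => ?_
    rw [List.count_append, hnone]; simp
  rw [Fintype.sum_option] at hrow_none hcol_none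
  simp only [Fintype.sum_option] at hrow_some hcol_some
  -- The slack `s` is extra flow sent directly from the root to the sink.
  set s : ℝ := (k : ℝ) + 2 / 3 - ∑ i, x i with hs
  have hs0 : 0 ≤ s := by rw [hs]; linarith
  -- `lam j` is the share of root copy `j` in the flow out of the root.
  set lam : Option (Fin k) → ℝ := fun j => (if j = none then 2 / 3 else 1) / ((k : ℝ) + 2 / 3)
    with hlam
  have hlam0 : ∀ j, 0 ≤ lam j := by
    intro j; simp only [hlam]; split_ifs <;> positivity
  have hlamsum : ∑ j, lam j = 1 := by
    rw [Fintype.sum_option]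
    simp only [hlam, if_true, reduceCtorEq, if_false, Finset.sum_const, Finset.card_univ,
      Fintype.card_fin, nsmul_eq_mul]
    field_simp
    ring
  have hlamk : ∀ j, lam j * ((k : ℝ) + 2 / 3) = if j = none then 2 / 3 else 1 := by
    intro j; simp only [hlam]; field_simp
  set N : Matrix (β ⊕ Option (Fin k)) (β ⊕ Option (Fin k)) ℝ := fun a b =>
    match a, b with
    | Sum.inl u, Sum.inl v => y (some u) (some v)
    | Sum.inl u, Sum.inr j => lam j * y (some u) none
    | Sum.inr j, Sum.inl v => lam j * y none (some v)
    | Sum.inr i, Sum.inr j => lam i * lam j * (y none none + s)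
        + if i = none ∧ j = none then 1 / 3 else 0 with hN
  have hNds : N ∈ doublyStochastic ℝ (β ⊕ Option (Fin k)) := by
    rw [mem_doublyStochastic_iff_sum]
    refine ⟨?_, ?_, ?_⟩
    · rintro (u | i) (v | j)
      · exact hy0 _ _
      · exact mul_nonneg (hlam0 _) (hy0 _ _)
      · exact mul_nonneg (hlam0 _) (hy0 _ _)
      · refine add_nonneg (mul_nonneg (mul_nonneg (hlam0 _) (hlam0 _)) ?_) ?_
        · exact add_nonneg (hy0 _ _) hs0
        · split_ifs <;> norm_num
    · rintro (u | i)
      · simp only [Fintype.sum_sum_type, hN]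
        rw [← Finset.sum_mul, hlamsum]
        linarith [hrow_some u]
      · simp only [Fintype.sum_sum_type, hN, Finset.sum_add_distrib]
        rw [← Finset.mul_sum, ← Finset.sum_mul, ← Finset.mul_sum, hlamsum]
        have h1 : ∑ j : Option (Fin k), (if i = none ∧ j = none then (1 / 3 : ℝ) else 0)
            = if i = none then 1 / 3 else 0 := by simp [ite_and]
        have h2 := hlamk i
        have h3 : ∑ v, y none (some v) = (k : ℝ) + 2 / 3 - s - y none none := by
          rw [hs]; linarith
        rw [h1, h3]
        have h4 : lam i * ((k : ℝ) + 2 / 3 - s - y none none)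
            + (lam i * 1 * (y none none + s) + if i = none then (1 / 3 : ℝ) else 0)
            = lam i * ((k : ℝ) + 2 / 3) + if i = none then (1 / 3 : ℝ) else 0 := by ring
        rw [h4, h2]
        split_ifs <;> norm_num
    · rintro (u | i)
      · simp only [Fintype.sum_sum_type, hN]
        rw [← Finset.sum_mul, hlamsum]
        linarith [hcol_some u]
      · simp only [Fintype.sum_sum_type, hN, Finset.sum_add_distrib]
        rw [← Finset.mul_sum, ← Finset.sum_mul, ← Finset.sum_mul, hlamsum]
        have h1 : ∑ j : Option (Fin k), (if j = none ∧ i = none then (1 / 3 : ℝ) else 0)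
            = if i = none then 1 / 3 else 0 := by simp [ite_and]
        have h2 := hlamk i
        have h3 : ∑ v, y (some v) none = (k : ℝ) + 2 / 3 - s - y none none := by
          rw [hs]; linarith
        rw [h1, h3]
        have h4 : lam i * ((k : ℝ) + 2 / 3 - s - y none none)
            + (1 * lam i * (y none none + s) + if i = none then (1 / 3 : ℝ) else 0)
            = lam i * ((k : ℝ) + 2 / 3) + if i = none then (1 / 3 : ℝ) else 0 := by ring
        rw [h4, h2]
        split_ifs <;> norm_num
  obtain ⟨w, hw0, hw1, hwN⟩ := exists_eq_sum_perm_of_mem_doublyStochastic hNds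
  have hent : ∀ a b, N a b = ∑ σ, w σ * if σ a = b then 1 else 0 := by
    intro a b
    rw [← hwN, Matrix.sum_apply]
    refine Finset.sum_congr rfl fun σ _ => ?_
    simp [Equiv.Perm.permMatrix, PEquiv.toMatrix_apply, Equiv.toPEquiv_apply, eq_comm]
  have hsupp : ∀ σ a, w σ ≤ N a (σ a) := by
    intro σ a
    rw [hent]
    refine le_trans (le_of_eq ?_) (Finset.single_le_sum (f := fun τ => w τ * if τ a = σ a then 1 else 0)
      (fun τ _ => mul_nonneg (hw0 τ) (by split_ifs <;> norm_num)) (Finset.mem_univ σ))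
    simp
  set C : ℝ := ∑ i, x i * pathCost g (L i) with hC
  have hstep0 : ∀ v (a : β ⊕ Option (Fin k)), 0 ≤ stepCost g v a := by
    rintro v (u | j)
    · exact hnn u v
    · exact le_rfl
  set G : Equiv.Perm (β ⊕ Option (Fin k)) → ℝ := fun σ => ∑ v, stepCost g v (σ.symm (Sum.inl v))
    with hG
  have hG0 : ∀ σ, 0 ≤ G σ := fun σ => Finset.sum_nonneg fun v _ => hstep0 _ _
  have hGC : ∑ σ, w σ * G σ = C := by
    have h1 : ∀ σ : Equiv.Perm (β ⊕ Option (Fin k)), ∀ v,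
        stepCost g v (σ.symm (Sum.inl v))
          = ∑ u, (if σ (Sum.inl u) = Sum.inl v then 1 else 0) * g u v := by
      intro σ v
      have : ∀ u, (σ (Sum.inl u) = Sum.inl v) ↔ (Sum.inl u = σ.symm (Sum.inl v)) := fun u =>
        (Equiv.eq_symm_apply σ).symm
      simp only [this]
      rcases σ.symm (Sum.inl v) with u' | j
      · simp [stepCost]
      · simp [stepCost]
    have h2 : ∑ σ, w σ * G σ = ∑ v, ∑ u, N (Sum.inl u) (Sum.inl v) * g u v := by
      simp only [hG, h1, hent, Finset.mul_sum, Finset.sum_mul]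
      rw [Finset.sum_comm]
      refine Finset.sum_congr rfl fun v _ => ?_
      rw [Finset.sum_comm]
      refine Finset.sum_congr rfl fun u _ => Finset.sum_congr rfl fun σ _ => ?_
      ring
    rw [h2, hC, Finset.sum_comm]
    have h3 : ∀ i, x i * pathCost g (L i) = ∑ u, ∑ v, x i * adj (L i) u v * g u v := by
      intro i
      simp only [pathCost_eq_adj, Finset.mul_sum, mul_assoc]
    simp only [h3, hN, hy, adj_withEnds_some, Finset.sum_mul]
    symm
    rw [Finset.sum_comm]
    refine Finset.sum_congr rfl fun u _ => ?_
    rw [Finset.sum_comm]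
  -- Averaging over the permutations that match the last root copy to the last sink copy.
  obtain ⟨σ, hσw, hσn, hσG⟩ : ∃ σ, 0 < w σ ∧ σ (Sum.inr none) = Sum.inr none ∧ G σ ≤ 3 * C := by
    by_contra! hcon
    have h1 : (1 / 3 : ℝ) ≤ ∑ σ, w σ * if σ (Sum.inr none) = Sum.inr none then 1 else 0 := by
      rw [← hent]
      simp only [hN, and_self, if_true]
      have := mul_nonneg (mul_nonneg (hlam0 none) (hlam0 none)) (add_nonneg (hy0 none none) hs0)
      linarith
    have h2 : 0 < ∑ σ, w σ * if σ (Sum.inr none) = Sum.inr none then 1 else 0 := by linarith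
    obtain ⟨τ, _, hτ⟩ := Finset.exists_lt_of_sum_lt
      (f := fun _ : Equiv.Perm (β ⊕ Option (Fin k)) => (0 : ℝ)) (by simpa using h2)
    have hC0 : 0 ≤ C := by
      rw [← hGC]; exact Finset.sum_nonneg fun σ _ => mul_nonneg (hw0 σ) (hG0 σ)
    have h3 : ∑ σ, (w σ * if σ (Sum.inr none) = Sum.inr none then 1 else 0) * (3 * C)
        < ∑ σ, w σ * G σ := by
      refine Finset.sum_lt_sum (fun σ _ => ?_) ⟨τ, Finset.mem_univ _, ?_⟩
      · split_ifs with hσ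
        · rcases (hw0 σ).eq_or_lt with h | h
          · simp [← h]
          · rw [mul_one]
            exact mul_le_mul_of_nonneg_left (hcon σ h hσ).le (hw0 σ)
        · simpa using mul_nonneg (hw0 σ) (hG0 σ)
      · split_ifs at hτ ⊢ with hσ
        · rw [mul_one]
          exact mul_lt_mul_of_pos_left (hcon τ hτ hσ) hτ
        · simp at hτ
    rw [← Finset.sum_mul, hGC] at h3
    nlinarith
  have hne : ∀ v, σ.symm (Sum.inl v) ≠ Sum.inr none := by
    intro v h
    have := (Equiv.symm_apply_eq σ).1 h
    rw [hσn] at this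
    cases this
  have hpr : ∀ v, ∃ a : β ⊕ Fin k, σ.symm (Sum.inl v) = Sum.map id some a := by
    intro v
    rcases h : σ.symm (Sum.inl v) with u | (_ | j)
    · exact ⟨Sum.inl u, rfl⟩
    · exact absurd h (hne v)
    · exact ⟨Sum.inr j, rfl⟩
  choose pr hpr using hpr
  have hstep : ∀ v, stepCost g v (pr v) = stepCost g v (σ.symm (Sum.inl v)) := by
    intro v
    rw [hpr v]
    rcases pr v with u | j <;> rfl
  obtain ⟨Q, hQ1, hQ2, hQ3⟩ := exists_paths_of_pred D g pr
    (by
      intro u v h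
      have h1 : σ.symm (Sum.inl u) = σ.symm (Sum.inl v) := by rw [hpr, hpr, h]
      exact Sum.inl_injective (σ.symm.injective h1))
    (by
      intro u v h
      by_contra hlt
      have h1 : σ.symm (Sum.inl v) = Sum.inl u := by rw [hpr, h]; rfl
      have h2 : σ (Sum.inl u) = Sum.inl v := ((Equiv.symm_apply_eq σ).1 h1).symm
      have h3 := hsupp σ (Sum.inl u)
      rw [h2] at h3
      have h4 : N (Sum.inl u) (Sum.inl v) = 0 := by
        simp only [hN, hy, adj_withEnds_some]
        refine Finset.sum_eq_zero fun i _ => ?_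
        rw [adj_eq_zero (R := fun u v => D u < D v) hlt _ (hL i), mul_zero]
      linarith)
  refine ⟨Q, hQ1, ?_, hQ3⟩
  rw [hQ2]
  simp only [hstep]
  exact hσG

end Flow

/-! ### Merging active sets into tours -/

section Grow

variable {β : Type*} [Fintype β] [DecidableEq β]

/-- The part with label `ℓ` of the partition given by a labelling `p`. -/
def fiber (p : β → β) (ℓ : β) : Finset β := Finset.univ.filter (fun u => p u = ℓ)

lemma mem_fiber {p : β → β} {ℓ u : β} : u ∈ fiber p ℓ ↔ p u = ℓ := by simp [fiber]

/-- The cut function of `S`: `1` if exactly one of `u`, `v` lies in `S`, and `0` otherwise. -/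
def sep (S : Finset β) (u v : β) : ℝ := if (u ∈ S ↔ v ∈ S) then 0 else 1

omit [Fintype β] in
lemma sep_nonneg (S : Finset β) (u v : β) : 0 ≤ sep S u v := by
  unfold sep; split_ifs <;> norm_num

omit [Fintype β] in
lemma sep_tri (S : Finset β) (u v w : β) : sep S u v ≤ sep S u w + sep S w v := by
  unfold sep
  by_cases h1 : u ∈ S <;> by_cases h2 : v ∈ S <;> by_cases h3 : w ∈ S <;> simp [h1, h2, h3]

/-- `HasTour c S b`: based at any node of `S` there is a closed walk visiting exactly the nodes of
`S`, of cost at most `b`. -/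
def HasTour (c : β → β → ℝ) (S : Finset β) (b : ℝ) : Prop :=
  ∀ w ∈ S, ∃ t : List β, t.head? = some w ∧ t.getLast? = some w ∧ (∀ u, u ∈ t ↔ u ∈ S) ∧
    pathCost c t ≤ b

omit [Fintype β] in
lemma exists_tour_union_left {c : β → β → ℝ} {S T : Finset β} {b₁ b₂ : ℝ} (h₁ : HasTour c S b₁)
    (h₂ : HasTour c T b₂) {u v : β} (hu : u ∈ S) (hv : v ∈ T) (hsymm : c u v = c v u) {w : β}
    (hw : w ∈ S) :
    ∃ t : List β, t.head? = some w ∧ t.getLast? = some w ∧ (∀ z, z ∈ t ↔ z ∈ S ∪ T) ∧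
      pathCost c t ≤ b₁ + b₂ + 2 * c u v := by
  obtain ⟨t, ht1, ht2, ht3, ht4⟩ := h₁ w hw
  obtain ⟨t', ht1', ht2', ht3', ht4'⟩ := h₂ v hv
  obtain ⟨p, s, rfl⟩ := List.append_of_mem ((ht3 u).2 hu)
  refine ⟨p ++ u :: (t' ++ u :: s), ?_, ?_, ?_, ?_⟩
  · cases p with
    | nil => simpa using ht1
    | cons a p => simpa using ht1
  · simp only [List.getLast?_append, List.getLast?_cons] at ht2 ⊢
    simpa using ht2
  · intro z
    have h1 := ht3 z
    have h2 := ht3' z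
    simp only [List.mem_append, List.mem_cons, Finset.mem_union] at h1 h2 ⊢
    rw [← h1, ← h2]; tauto
  · obtain ⟨q, rfl⟩ := List.head?_eq_some_iff.1 ht1'
    obtain ⟨q', hq'⟩ := List.getLast?_eq_some_iff.1 ht2'
    have e1 : pathCost c ((v :: q) ++ u :: s)
        = pathCost c (v :: q) + c v u + pathCost c (u :: s) := by
      rw [hq', List.append_assoc, List.singleton_append, pathCost_append_cons c v,
        pathCost_cons_cons]
      ring
    have e2 : pathCost c (u :: ((v :: q) ++ u :: s)) = c u v + pathCost c ((v :: q) ++ u :: s) :=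
      rfl
    rw [pathCost_append_cons] at ht4 ⊢
    rw [e2, e1]
    linarith

omit [Fintype β] in
/-- Two closed tours joined by traversing a connecting edge back and forth. -/
lemma HasTour.union {c : β → β → ℝ} (hsymm : ∀ u v, c u v = c v u) {S T : Finset β} {b₁ b₂ : ℝ}
    (h₁ : HasTour c S b₁) (h₂ : HasTour c T b₂) {u v : β} (hu : u ∈ S) (hv : v ∈ T) :
    HasTour c (S ∪ T) (b₁ + b₂ + 2 * c u v) := by
  intro w hw
  rcases Finset.mem_union.1 hw with hw | hw
  · exact exists_tour_union_left h₁ h₂ hu hv (hsymm u v) hw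
  · obtain ⟨t, h1, h2, h3, h4⟩ := exists_tour_union_left h₂ h₁ hv hu (hsymm v u) hw
    refine ⟨t, h1, h2, fun z => by rw [h3, Finset.union_comm], ?_⟩
    rw [hsymm u v]; linarith

/-- The reduced cost at time `T`: the part of `c u v` not yet paid for, for pairs in different
parts at least one of which is active. -/
def redCost (c : β → β → ℝ) (Act : Finset β → Prop) [DecidablePred Act] (p : β → β) (T : ℝ)
    (u v : β) : ℝ :=
  if p u ≠ p v ∧ (Act (fiber p (p u)) ∨ Act (fiber p (p v))) then c u v - T else 0

/-- The number of active parts. Labels that are not values of `p` have empty fibre, which will not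
be active. -/
def numAct (Act : Finset β → Prop) [DecidablePred Act] (p : β → β) : ℝ :=
  ∑ ℓ, if Act (fiber p ℓ) then 1 else 0

/-- Kruskal's algorithm for a downward closed family `Act` of active sets, run from time `T` on.
Parts are merged along a shortest edge leaving an active part until no active part is left.
The bound is the dual-fitting argument behind the factor `2`: if the next merge happens at time
`T'`, every active part has collected dual value `(T' - T)/2` in the meantime, which is paid for by
the fractional weight `w` crossing its boundary, while an edge of cost `T'` is bought (and
traversed twice by the tour) and at least one active part disappears. -/
lemma exists_grow {c : β → β → ℝ} (hsymm : ∀ u v, c u v = c v u)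
    (Act : Finset β → Prop) [DecidablePred Act]
    (hAct0 : ¬ Act ∅) (hActU : ¬ Act Finset.univ)
    (hmono : ∀ S S' : Finset β, S.Nonempty → S ⊆ S' → Act S' → Act S)
    (w : β → β → ℝ) (hw0 : ∀ u v, 0 ≤ w u v)
    (hcut : ∀ S, Act S → 1 ≤ ∑ u, ∑ v, w u v * sep S u v) :
    ∀ (n : ℕ) (p : β → β) (b : β → ℝ) (T : ℝ), (Finset.univ.image p).card = n → 0 ≤ T →
      (∀ ℓ, 0 ≤ b ℓ) → (∀ ℓ, HasTour c (fiber p ℓ) (b ℓ)) →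
      (∀ u v, p u ≠ p v → Act (fiber p (p u)) → T ≤ c u v) →
      ∃ (p' : β → β) (b' : β → ℝ), (∀ ℓ, ¬ Act (fiber p' ℓ)) ∧ (∀ ℓ, 0 ≤ b' ℓ) ∧
        (∀ ℓ, HasTour c (fiber p' ℓ) (b' ℓ)) ∧
        ∑ ℓ, b' ℓ ≤ ∑ ℓ, b ℓ + 4 * (∑ u, ∑ v, w u v * redCost c Act p T u v)
          + 2 * numAct Act p * T := by
  intro n
  induction n using Nat.strong_induction_on with
  | _ n ih =>
  intro p b T hn hT hb htour hpT
  by_cases hex : ∃ ℓ, Act (fiber p ℓ)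
  swap
  · refine ⟨p, b, fun ℓ h => hex ⟨ℓ, h⟩, hb, htour, ?_⟩
    have h1 : numAct Act p = 0 :=
      Finset.sum_eq_zero fun ℓ _ => if_neg fun h => hex ⟨ℓ, h⟩
    have h2 : ∀ u v, redCost c Act p T u v = 0 := fun u v =>
      if_neg fun h => h.2.elim (fun h => hex ⟨_, h⟩) (fun h => hex ⟨_, h⟩)
    simp [h1, h2]
  -- The next edge to be bought.
  obtain ⟨u₀, v₀, hne, hact, hmin⟩ : ∃ u₀ v₀, p u₀ ≠ p v₀ ∧ Act (fiber p (p u₀)) ∧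
      ∀ u v, p u ≠ p v → Act (fiber p (p u)) → c u₀ v₀ ≤ c u v := by
    obtain ⟨ℓ, hℓ⟩ := hex
    obtain ⟨u, hu⟩ : (fiber p ℓ).Nonempty := by
      by_contra h
      rw [Finset.not_nonempty_iff_eq_empty] at h
      exact hAct0 (h ▸ hℓ)
    rw [mem_fiber] at hu
    subst hu
    obtain ⟨v, hv⟩ : ∃ v, p u ≠ p v := by
      by_contra! h
      apply hActU
      convert hℓ
      ext z
      simp [mem_fiber, h z]
    obtain ⟨⟨u₀, v₀⟩, hm, hmin⟩ := Finset.exists_min_image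
      (Finset.univ.filter fun q : β × β => p q.1 ≠ p q.2 ∧ Act (fiber p (p q.1)))
      (fun q => c q.1 q.2) ⟨(u, v), by simp [hv, hℓ]⟩
    simp only [Finset.mem_filter, Finset.mem_univ, true_and] at hm hmin
    exact ⟨u₀, v₀, hm.1, hm.2, fun a b h1 h2 => hmin (a, b) ⟨h1, h2⟩⟩
  set T' := c u₀ v₀ with hT'
  have hTT' : T ≤ T' := hpT _ _ hne hact
  set A := p u₀ with hA
  set B := p v₀ with hB
  set p₁ : β → β := fun u => if p u = A then B else p u with hp₁
  set b₁ : β → ℝ := fun ℓ => b ℓ - (if ℓ = A then b A else 0)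
    + (if ℓ = B then b A + 2 * T' else 0) with hb₁
  have hfac : ∀ u v, p u = p v → p₁ u = p₁ v := by
    intro u v h; simp only [hp₁, h]
  have hfibA : fiber p₁ A = ∅ := by
    ext z
    simp only [mem_fiber, hp₁, Finset.notMem_empty, iff_false]
    split_ifs with h
    · exact fun h' => hne h'.symm
    · exact h
  have hfibB : fiber p₁ B = fiber p A ∪ fiber p B := by
    ext z
    simp only [mem_fiber, hp₁, Finset.mem_union]
    split_ifs with h
    · simp [h]
    · simp [h]
  have hfib : ∀ ℓ, ℓ ≠ A → ℓ ≠ B → fiber p₁ ℓ = fiber p ℓ := by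
    intro ℓ h1 h2
    ext z
    simp only [mem_fiber, hp₁]
    split_ifs with h
    · rw [h]
      exact ⟨fun h' => absurd h'.symm h2, fun h' => absurd h'.symm h1⟩
    · rfl
  have hact₁ : ∀ u, Act (fiber p₁ (p₁ u)) → Act (fiber p (p u)) := by
    intro u h
    refine hmono _ _ ⟨u, mem_fiber.2 rfl⟩ ?_ h
    intro z hz
    rw [mem_fiber] at hz ⊢
    exact hfac _ _ hz
  have hcard : (Finset.univ.image p₁).card < n := by
    rw [← hn]
    refine Finset.card_lt_card ?_
    rw [Finset.ssubset_iff_of_subset]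
    · refine ⟨A, Finset.mem_image_of_mem _ (Finset.mem_univ _), ?_⟩
      intro h
      obtain ⟨z, _, hz⟩ := Finset.mem_image.1 h
      have : z ∈ fiber p₁ A := mem_fiber.2 hz
      rw [hfibA] at this
      simp at this
    · intro ℓ h
      obtain ⟨z, _, rfl⟩ := Finset.mem_image.1 h
      simp only [hp₁]
      split_ifs
      · exact Finset.mem_image_of_mem _ (Finset.mem_univ _)
      · exact Finset.mem_image_of_mem _ (Finset.mem_univ _)
  have hT'0 : 0 ≤ T' := hT.trans hTT'
  have hb₁A : b₁ A = 0 := by simp [hb₁, hne]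
  have hb₁B : b₁ B = b A + b B + 2 * T' := by simp [hb₁, hne.symm]; ring
  have hb₁o : ∀ ℓ, ℓ ≠ A → ℓ ≠ B → b₁ ℓ = b ℓ := by
    intro ℓ h1 h2; simp [hb₁, h1, h2]
  obtain ⟨p', b', h1, h2, h3, h4⟩ := ih _ hcard p₁ b₁ T' rfl hT'0
    (by
      intro ℓ
      by_cases hℓA : ℓ = A
      · rw [hℓA, hb₁A]
      · by_cases hℓB : ℓ = B
        · rw [hℓB, hb₁B]; linarith [hb A, hb B]
        · rw [hb₁o ℓ hℓA hℓB]; exact hb ℓ)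
    (by
      intro ℓ
      by_cases hℓA : ℓ = A
      · rw [hℓA, hfibA]; intro z hz; simp at hz
      · by_cases hℓB : ℓ = B
        · rw [hℓB, hb₁B, hfibB]
          exact HasTour.union hsymm (htour A) (htour B) (mem_fiber.2 rfl) (mem_fiber.2 rfl)
        · rw [hb₁o ℓ hℓA hℓB, hfib ℓ hℓA hℓB]; exact htour ℓ)
    (by
      intro u v huv hu
      exact hmin u v (fun h => huv (hfac _ _ h)) (hact₁ u hu))
  refine ⟨p', b', h1, h2, h3, h4.trans ?_⟩
  have hsumb : ∑ ℓ, b₁ ℓ = ∑ ℓ, b ℓ + 2 * T' := by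
    simp only [hb₁, Finset.sum_add_distrib, Finset.sum_sub_distrib, Finset.sum_ite_eq',
      Finset.mem_univ, if_true]
    ring
  have hnum : numAct Act p₁ ≤ numAct Act p - 1 := by
    have : numAct Act p₁ ≤ ∑ ℓ, ((if Act (fiber p ℓ) then 1 else 0) - if ℓ = A then 1 else 0) := by
      refine Finset.sum_le_sum fun ℓ _ => ?_
      by_cases hℓA : ℓ = A
      · rw [hℓA, hfibA]; simp [hAct0, hact]
      · by_cases hℓB : ℓ = B
        · have hB1 : Act (fiber p₁ B) → Act (fiber p B) := by
            refine hmono _ _ ⟨v₀, mem_fiber.2 rfl⟩ ?_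
            rw [hfibB]; exact Finset.subset_union_right
          rw [hℓB]
          by_cases hh : Act (fiber p₁ B)
          · simp [hh, hB1 hh, hne.symm]
          · simp only [hh, if_false, hne.symm, sub_zero]; split_ifs <;> norm_num
        · rw [hfib ℓ hℓA hℓB]; simp [hℓA]
    refine this.trans (le_of_eq ?_)
    rw [Finset.sum_sub_distrib]
    simp [numAct]
  -- Reduced costs pay for the dual growth of the active parts.
  have hpt : ∀ u v, redCost c Act p₁ T' u v
      + (T' - T) / 2 * ∑ ℓ, (if Act (fiber p ℓ) then sep (fiber p ℓ) u v else 0)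
      ≤ redCost c Act p T u v := by
    intro u v
    by_cases huv : p u = p v
    · have e1 : ∀ ℓ, sep (fiber p ℓ) u v = 0 := fun ℓ => by
        simp [sep, mem_fiber, huv]
      simp [e1, redCost, huv, hfac u v huv]
    · have e1 : ∑ ℓ, (if Act (fiber p ℓ) then sep (fiber p ℓ) u v else 0)
          ≤ (if Act (fiber p (p u)) then 1 else 0) + (if Act (fiber p (p v)) then 1 else 0) := by
        have e2 : ∑ ℓ, (if Act (fiber p ℓ) then sep (fiber p ℓ) u v else 0)
            ≤ ∑ ℓ, ((if ℓ = p u then (if Act (fiber p (p u)) then (1 : ℝ) else 0) else 0)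
              + (if ℓ = p v then (if Act (fiber p (p v)) then 1 else 0) else 0)) := by
          refine Finset.sum_le_sum fun ℓ _ => ?_
          by_cases h1 : ℓ = p u
          · subst h1
            have : sep (fiber p (p u)) u v ≤ 1 := by unfold sep; split_ifs <;> norm_num
            simp only [if_true, if_neg huv, add_zero]
            split_ifs <;> linarith
          · by_cases h2 : ℓ = p v
            · subst h2
              have : sep (fiber p (p v)) u v ≤ 1 := by unfold sep; split_ifs <;> norm_num
              simp only [if_true, if_neg (Ne.symm huv), zero_add]
              split_ifs <;> linarith
            · have : sep (fiber p ℓ) u v = 0 := by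
                simp [sep, mem_fiber, Ne.symm h1, Ne.symm h2]
              simp [this, h1, h2]
        refine e2.trans (le_of_eq ?_)
        rw [Finset.sum_add_distrib]
        simp
      have hδ : 0 ≤ (T' - T) / 2 := by linarith
      have e3 := mul_le_mul_of_nonneg_left e1 hδ
      by_cases hor : Act (fiber p (p u)) ∨ Act (fiber p (p v))
      · have hc : T' ≤ c u v := by
          rcases hor with h | h
          · exact hmin u v huv h
          · rw [hsymm]; exact hmin v u (Ne.symm huv) h
        have e4 : redCost c Act p T u v = c u v - T := if_pos ⟨huv, hor⟩
        have e5 : redCost c Act p₁ T' u v ≤ c u v - T' := by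
          unfold redCost; split_ifs <;> linarith
        have e6 : ((if Act (fiber p (p u)) then 1 else 0)
            + (if Act (fiber p (p v)) then 1 else 0) : ℝ) ≤ 2 := by split_ifs <;> norm_num
        have e7 := mul_le_mul_of_nonneg_left e6 hδ
        rw [e4]; linarith
      · have e4 : redCost c Act p T u v = 0 := if_neg fun h => hor h.2
        have e5 : redCost c Act p₁ T' u v = 0 :=
          if_neg fun h => hor (h.2.imp (hact₁ u) (hact₁ v))
        rw [not_or] at hor
        simp only [hor.1, hor.2, if_false, add_zero, mul_zero] at e3
        rw [e4, e5]; linarith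
  have hsum : (∑ u, ∑ v, w u v * redCost c Act p₁ T' u v) + (T' - T) / 2 * numAct Act p
      ≤ ∑ u, ∑ v, w u v * redCost c Act p T u v := by
    have e1 : numAct Act p ≤ ∑ u, ∑ v, w u v *
        ∑ ℓ, (if Act (fiber p ℓ) then sep (fiber p ℓ) u v else 0) := by
      have e2 : ∑ u, ∑ v, w u v * ∑ ℓ, (if Act (fiber p ℓ) then sep (fiber p ℓ) u v else 0)
          = ∑ ℓ, if Act (fiber p ℓ) then ∑ u, ∑ v, w u v * sep (fiber p ℓ) u v else 0 := by
        simp only [Finset.mul_sum]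
        have : ∀ u, ∑ v, ∑ ℓ, w u v * (if Act (fiber p ℓ) then sep (fiber p ℓ) u v else 0)
            = ∑ ℓ, ∑ v, w u v * (if Act (fiber p ℓ) then sep (fiber p ℓ) u v else 0) :=
          fun u => Finset.sum_comm
        simp only [this]
        rw [Finset.sum_comm]
        refine Finset.sum_congr rfl fun ℓ _ => ?_
        split_ifs <;> simp
      rw [e2]
      refine Finset.sum_le_sum fun ℓ _ => ?_
      split_ifs with h
      · exact hcut _ h
      · exact le_rfl
    have hδ : 0 ≤ (T' - T) / 2 := by linarith
    refine (add_le_add_right (mul_le_mul_of_nonneg_left e1 hδ) _).trans ?_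
    rw [Finset.mul_sum, ← Finset.sum_add_distrib]
    refine Finset.sum_le_sum fun u _ => ?_
    rw [Finset.mul_sum, ← Finset.sum_add_distrib]
    refine Finset.sum_le_sum fun v _ => ?_
    have := mul_le_mul_of_nonneg_left (hpt u v) (hw0 u v)
    linarith
  rw [hsumb]
  have := mul_le_mul_of_nonneg_right hnum hT'0
  nlinarith

/-- If the weight `w` crosses every active set at least once, the nodes can be partitioned into
inactive parts carrying closed tours of total cost at most four times the cost of `w`. -/
lemma exists_partition_tours {c : β → β → ℝ} (hsymm : ∀ u v, c u v = c v u)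
    (hnn : ∀ u v, 0 ≤ c u v) (Act : Finset β → Prop)
    (hAct0 : ¬ Act ∅) (hActU : ¬ Act Finset.univ)
    (hmono : ∀ S S' : Finset β, S.Nonempty → S ⊆ S' → Act S' → Act S)
    (w : β → β → ℝ) (hw0 : ∀ u v, 0 ≤ w u v)
    (hcut : ∀ S, Act S → 1 ≤ ∑ u, ∑ v, w u v * sep S u v) :
    ∃ (p : β → β) (b : β → ℝ), (∀ ℓ, ¬ Act (fiber p ℓ)) ∧ (∀ ℓ, 0 ≤ b ℓ) ∧
      (∀ ℓ, HasTour c (fiber p ℓ) (b ℓ)) ∧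
      ∑ ℓ, b ℓ ≤ 4 * ∑ u, ∑ v, w u v * c u v := by
  classical
  obtain ⟨p, b, h1, h2, h3, h4⟩ := exists_grow hsymm Act hAct0 hActU hmono w hw0 hcut _ id
    (fun _ => 0) 0 rfl le_rfl (fun _ => le_rfl)
    (by
      intro ℓ w hw
      rw [mem_fiber] at hw
      refine ⟨[w], rfl, rfl, fun u => ?_, le_rfl⟩
      rw [mem_fiber, List.mem_singleton, ← hw]; rfl)
    (fun u v _ _ => hnn u v)
  refine ⟨p, b, h1, h2, h3, h4.trans ?_⟩
  simp only [Finset.sum_const_zero, zero_add, mul_zero, add_zero]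
  refine mul_le_mul_of_nonneg_left ?_ (by norm_num)
  refine Finset.sum_le_sum fun u _ => Finset.sum_le_sum fun v _ =>
    mul_le_mul_of_nonneg_left ?_ (hw0 u v)
  unfold redCost
  split_ifs
  · simp
  · exact hnn u v

end Grow

/-! ### Splitting a path into blocks -/

section Blocks

variable {β : Type*}

/-- Here `a :: l` is the rest of a path whose nodes before it have maximal distance `M` from the
root, and wherever the path is cut within `l`, some later node is at most as far from the root as
some earlier one. Thus each time the path rises above its maximal level so far, it comes back to
that level later, and together with the final climb the new levels are crossed three times. With a
credit of `2 * (M - D a)` for the levels below `M`, the cost therefore pays once for the climb from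
`a` to the last node and twice for the climb to the last node from any node `e`. -/
lemma climb_bound {c : β → β → ℝ} {D : β → ℝ} (h₁ : ∀ u v, D v ≤ D u + c u v)
    (h₂ : ∀ u v, D u ≤ D v + c u v) :
    ∀ (l : List β) (a : β) (M : ℝ), D a ≤ M →
      (∀ p b s, l = p ++ b :: s → ∃ e ∈ b :: s, D e ≤ M ∨ ∃ e' ∈ p, D e ≤ D e') →
      ∀ e ∈ a :: l, (D (l.getLastD a) - D a) + 2 * (D (l.getLastD a) - D e)
        ≤ pathCost c (a :: l) + 2 * (M - D a) := by
  intro l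
  induction l with
  | nil =>
    intro a M ha _ e he
    rw [List.mem_singleton] at he
    subst he
    simp [pathCost, ha]
  | cons b l ih =>
    intro a M ha hbad e he
    rw [List.getLastD_cons, pathCost_cons_cons]
    have hc1 := h₁ a b
    have hc2 := h₂ a b
    rcases le_or_gt (D b) M with hbM | hbM
    · have IH := ih b M hbM (by
        intro p b' s hl
        obtain ⟨e, he, h⟩ := hbad (b :: p) b' s (by rw [hl]; rfl)
        refine ⟨e, he, ?_⟩
        rcases h with h | ⟨e', he', h⟩
        · exact Or.inl h
        · rcases List.mem_cons.1 he' with rfl | he'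
          · exact Or.inl (h.trans hbM)
          · exact Or.inr ⟨e', he', h⟩)
      rcases List.mem_cons.1 he with rfl | he
      · linarith [IH b (by simp)]
      · linarith [IH e he]
    · obtain ⟨e₀, he₀, h⟩ := hbad [] b l rfl
      have he₀M : D e₀ ≤ M := by simpa using h
      have IH := ih b (D b) le_rfl (by
        intro p b' s hl
        obtain ⟨e, he, h⟩ := hbad (b :: p) b' s (by rw [hl]; rfl)
        refine ⟨e, he, ?_⟩
        rcases h with h | ⟨e', he', h⟩
        · exact Or.inl (h.trans hbM.le)
        · rcases List.mem_cons.1 he' with rfl | he'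
          · exact Or.inl h
          · exact Or.inr ⟨e', he', h⟩)
      rcases List.mem_cons.1 he with rfl | he
      · linarith [IH e₀ he₀]
      · linarith [IH e he]

/-- Every path splits into consecutive blocks at increasing distances from the root such that the
total cost inside the blocks is at most `3/2` times its regret. The blocks are those of a finest
splitting at increasing distances: inside such a block every level between the distances of its end
nodes is crossed at least three times, so at least two thirds of its cost is regret. -/
lemma exists_blocks {c : β → β → ℝ} {D : β → ℝ} (h₁ : ∀ u v, D v ≤ D u + c u v)
    (h₂ : ∀ u v, D u ≤ D v + c u v) :
    ∀ (n : ℕ) (L : List β), L.length = n → ∃ Bs : List (List β), Bs.flatten = L ∧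
      Bs.Pairwise (fun A B => ∀ a ∈ A, ∀ b ∈ B, D a < D b) ∧
      (Bs.map (pathCost c)).sum ≤ 3 / 2 * pathCost (regCost c D) L := by
  intro n
  induction n using Nat.strong_induction_on with
  | _ n ih =>
  intro L hn
  by_cases hsplit : ∃ p s : List β, p ≠ [] ∧ s ≠ [] ∧ L = p ++ s ∧ ∀ a ∈ p, ∀ b ∈ s, D a < D b
  · obtain ⟨p, s, hp, hs, rfl, hlt⟩ := hsplit
    have hp' := List.length_pos_iff.2 hp
    have hs' := List.length_pos_iff.2 hs
    rw [List.length_append] at hn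
    obtain ⟨B₁, e₁, o₁, c₁⟩ := ih p.length (by omega) p rfl
    obtain ⟨B₂, e₂, o₂, c₂⟩ := ih s.length (by omega) s rfl
    refine ⟨B₁ ++ B₂, by rw [List.flatten_append, e₁, e₂], ?_, ?_⟩
    · rw [List.pairwise_append]
      refine ⟨o₁, o₂, fun A hA B hB a ha b hb => hlt a ?_ b ?_⟩
      · rw [← e₁]; exact List.mem_flatten.2 ⟨A, hA, ha⟩
      · rw [← e₂]; exact List.mem_flatten.2 ⟨B, hB, hb⟩
    · have := pathCost_append_ge (c := regCost c D)
        (fun u v => by unfold regCost; linarith [h₁ u v]) s p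
      rw [List.map_append, List.sum_append]
      linarith
  · refine ⟨[L], by simp, by simp, ?_⟩
    cases L with
    | nil => simp [pathCost]
    | cons a l =>
      have := climb_bound h₁ h₂ l a (D a) le_rfl (by
        intro p b s hl
        by_contra! hcon
        refine hsplit ⟨a :: p, b :: s, by simp, by simp, by rw [hl]; rfl, ?_⟩
        intro x hx y hy
        rcases List.mem_cons.1 hx with rfl | hx
        · exact (hcon y hy).1
        · exact (hcon y hy).2 x hx) a (by simp)
      rw [pathCost_regCost]
      simp only [List.map_cons, List.map_nil, List.sum_cons, List.sum_nil]
      linarith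

end Blocks

/-! ### Clusters and witnesses -/

section Rounding

variable {β : Type*} [Fintype β] [DecidableEq β]

lemma sum_adj_blocks (h : β → β → ℝ) (Bs : List (List β)) :
    ∑ u, ∑ v, (Bs.map (fun B => adj B u v)).sum * h u v = (Bs.map (pathCost h)).sum := by
  induction Bs with
  | nil => simp
  | cons B Bs ih =>
    simp only [List.map_cons, List.sum_cons, add_mul, Finset.sum_add_distrib, ih,
      ← pathCost_eq_adj]

omit [Fintype β] in
lemma one_le_pathCost_sep {S : Finset β} {B : List β} {u z : β} (hu : u ∈ B) (hz : z ∈ B)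
    (huS : u ∈ S) (hzS : z ∉ S) : 1 ≤ pathCost (sep S) B := by
  obtain ⟨p, s, rfl⟩ := List.append_of_mem hu
  have h1 : pathCost (sep S) [u, z] = 1 := by simp [pathCost, sep, huS, hzS]
  have h2 : pathCost (sep S) [z, u] = 1 := by simp [pathCost, sep, huS, hzS]
  rcases List.mem_append.1 hz with h | h
  · rw [← h2]
    refine pathCost_sublist (sep_nonneg S) (sep_tri S) ?_
    exact (List.singleton_sublist.2 h).append (List.singleton_sublist.2 (by simp))
  · have h' : z ∈ s := by
      rcases List.mem_cons.1 h with rfl | h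
      · exact absurd huS hzS
      · exact h
    rw [← h1]
    refine pathCost_sublist (sep_nonneg S) (sep_tri S) ?_
    exact ((List.singleton_sublist.2 h').cons_cons u).trans (List.sublist_append_right _ _)

/-- The total weight of the paths that have a block containing `v` and contained in `S`. -/
def blockCov {m : ℕ} (Bs : Fin m → List (List β)) (x : Fin m → ℝ) (v : β) (S : Finset β) : ℝ :=
  ∑ i, if ∃ B ∈ Bs i, v ∈ B ∧ ∀ z ∈ B, z ∈ S then x i else 0

/-- If the blocks containing `v` cover `v` at least once, but those contained in `S` do so less
than `δ` times, then the blocks cross the boundary of `S` with weight at least `1 - δ`. -/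
lemma cut_bound {m : ℕ} (Bs : Fin m → List (List β)) (x : Fin m → ℝ) (hx : ∀ i, 0 ≤ x i)
    {v : β} {S : Finset β} {δ : ℝ} (hv : v ∈ S)
    (hcov : 1 ≤ ∑ i, if v ∈ (Bs i).flatten then x i else 0) (hδ : blockCov Bs x v S < δ) :
    1 - δ ≤ ∑ i, x i * ((Bs i).map (pathCost (sep S))).sum := by
  have : ∑ i, (if v ∈ (Bs i).flatten then x i else 0)
      ≤ blockCov Bs x v S + ∑ i, x i * ((Bs i).map (pathCost (sep S))).sum := by
    rw [blockCov, ← Finset.sum_add_distrib]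
    refine Finset.sum_le_sum fun i _ => ?_
    have hs0 : ∀ y ∈ (Bs i).map (pathCost (sep S)), 0 ≤ y := by
      intro y hy
      obtain ⟨B, _, rfl⟩ := List.mem_map.1 hy
      exact pathCost_nonneg (sep_nonneg S) B
    have h0 : 0 ≤ x i * ((Bs i).map (pathCost (sep S))).sum :=
      mul_nonneg (hx i) (List.sum_nonneg hs0)
    by_cases h1 : v ∈ (Bs i).flatten
    · rw [if_pos h1]
      by_cases h2 : ∃ B ∈ Bs i, v ∈ B ∧ ∀ z ∈ B, z ∈ S
      · rw [if_pos h2]; linarith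
      · rw [if_neg h2]
        obtain ⟨B, hB, hvB⟩ := List.mem_flatten.1 h1
        push Not at h2
        obtain ⟨z, hz, hzS⟩ := h2 B hB hvB
        have h3 := one_le_pathCost_sep hvB hz hv hzS
        have h4 : pathCost (sep S) B ≤ ((Bs i).map (pathCost (sep S))).sum :=
          List.single_le_sum hs0 _ (List.mem_map_of_mem hB)
        have := mul_le_mul_of_nonneg_left (h3.trans h4) (hx i)
        linarith
    · rw [if_neg h1]
      have : 0 ≤ if ∃ B ∈ Bs i, v ∈ B ∧ ∀ z ∈ B, z ∈ S then x i else 0 := by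
        split_ifs
        · exact hx i
        · exact le_rfl
      linarith
  linarith

/-- The clustering step. The parts of the partition carry cheap closed tours, and each has a witness
`wit` that is covered with weight at least `δ` by blocks contained in its part.

A set is active when all its nodes are covered with weight less than `δ` by blocks contained in it,
so that the blocks cross its boundary with weight more than `1 - δ`; the blocks, scaled by
`1 / (1 - δ)`, therefore pay for merging the active sets. -/
lemma exists_clusters {c : β → β → ℝ} {D : β → ℝ} (hsymm : ∀ u v, c u v = c v u)
    (hnn : ∀ u v, 0 ≤ c u v) (h₁ : ∀ u v, D v ≤ D u + c u v)
    {m : ℕ} (L : Fin m → List β) (x : Fin m → ℝ) (hx : ∀ i, 0 ≤ x i)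
    (hcov : ∀ v, 1 ≤ ∑ i, if v ∈ L i then x i else 0) {δ : ℝ} (hδ : δ < 1) :
    ∃ (Bs : Fin m → List (List β)) (p wit : β → β) (b : β → ℝ),
      (∀ i, (Bs i).flatten = L i) ∧
      (∀ i, (Bs i).Pairwise (fun A B => ∀ a ∈ A, ∀ b ∈ B, D a < D b)) ∧
      (∀ v, p (wit (p v)) = p v ∧ δ ≤ blockCov Bs x (wit (p v)) (fiber p (p v))) ∧
      (∀ ℓ, 0 ≤ b ℓ) ∧ (∀ ℓ, HasTour c (fiber p ℓ) (b ℓ)) ∧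
      ∑ ℓ, b ℓ ≤ 6 / (1 - δ) * ∑ i, x i * pathCost (regCost c D) (L i) := by
  have h₂ : ∀ u v, D u ≤ D v + c u v := fun u v => by rw [hsymm]; exact h₁ v u
  choose Bs hB1 hB2 hB3 using fun i => exists_blocks h₁ h₂ _ (L i) rfl
  have hδ' : 0 < 1 - δ := by linarith
  have hswap : ∀ h : β → β → ℝ,
      ∑ u, ∑ v, (∑ i, x i * ((Bs i).map (fun B => adj B u v)).sum) / (1 - δ) * h u v
        = (∑ i, x i * ((Bs i).map (pathCost h)).sum) / (1 - δ) := by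
    intro h
    simp only [← sum_adj_blocks, Finset.mul_sum, Finset.sum_div, Finset.sum_mul]
    conv_rhs => rw [Finset.sum_comm]
    refine Finset.sum_congr rfl fun u _ => ?_
    conv_rhs => rw [Finset.sum_comm]
    refine Finset.sum_congr rfl fun v _ => Finset.sum_congr rfl fun i _ => ?_
    ring
  have hcov' : ∀ v, 1 ≤ ∑ i, if v ∈ (Bs i).flatten then x i else 0 := by
    simpa only [hB1] using hcov
  obtain ⟨p, b, hp, hb, ht, hsum⟩ := exists_partition_tours hsymm hnn
    (fun S => S.Nonempty ∧ ∀ v ∈ S, blockCov Bs x v S < δ) (by simp)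
    (by
      rintro ⟨⟨v, hv⟩, h⟩
      have h1 := h v hv
      have h2 := hcov' v
      have h3 : blockCov Bs x v Finset.univ = ∑ i, if v ∈ (Bs i).flatten then x i else 0 := by
        simp [blockCov, List.mem_flatten]
      linarith)
    (by
      rintro S S' hS hSS' ⟨_, h⟩
      refine ⟨hS, fun v hv => lt_of_le_of_lt ?_ (h v (hSS' hv))⟩
      refine Finset.sum_le_sum fun i _ => ?_
      by_cases h1 : ∃ B ∈ Bs i, v ∈ B ∧ ∀ z ∈ B, z ∈ S
      · obtain ⟨B, hB, hvB, hBS⟩ := h1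
        rw [if_pos ⟨B, hB, hvB, hBS⟩, if_pos ⟨B, hB, hvB, fun z hz => hSS' (hBS z hz)⟩]
      · rw [if_neg h1]
        split_ifs
        · exact hx i
        · exact le_rfl)
    (fun u v => (∑ i, x i * ((Bs i).map (fun B => adj B u v)).sum) / (1 - δ))
    (by
      intro u v
      refine div_nonneg (Finset.sum_nonneg fun i _ => mul_nonneg (hx i) (List.sum_nonneg ?_)) hδ'.le
      intro y hy
      obtain ⟨B, _, rfl⟩ := List.mem_map.1 hy
      exact adj_nonneg u v B)
    (by
      rintro S ⟨⟨v, hv⟩, h⟩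
      rw [hswap, le_div_iff₀ hδ', one_mul]
      exact cut_bound Bs x hx hv (hcov' v) (h v hv))
  have hwit : ∀ ℓ, ∃ w, (fiber p ℓ).Nonempty → w ∈ fiber p ℓ ∧ δ ≤ blockCov Bs x w (fiber p ℓ) := by
    intro ℓ
    by_cases hne : (fiber p ℓ).Nonempty
    · have := hp ℓ
      push Not at this
      obtain ⟨w, hw⟩ := this hne
      exact ⟨w, fun _ => hw⟩
    · exact ⟨ℓ, fun h => absurd h hne⟩
  choose wit hwit using hwit
  refine ⟨Bs, p, wit, b, hB1, hB2, fun v => ?_, hb, ht, hsum.trans ?_⟩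
  · obtain ⟨h, h'⟩ := hwit (p v) ⟨v, mem_fiber.2 rfl⟩
    exact ⟨mem_fiber.1 h, h'⟩
  · rw [hswap, ← mul_div_assoc, div_mul_eq_mul_div]
    refine div_le_div_of_nonneg_right ?_ hδ'.le
    have : ∑ i, x i * ((Bs i).map (pathCost c)).sum
        ≤ ∑ i, x i * (3 / 2 * pathCost (regCost c D) (L i)) :=
      Finset.sum_le_sum fun i _ => mul_le_mul_of_nonneg_left (hB3 i) (hx i)
    have h2 : ∑ i, x i * (3 / 2 * pathCost (regCost c D) (L i))
        = 3 / 2 * ∑ i, x i * pathCost (regCost c D) (L i) := by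
      rw [Finset.mul_sum]
      exact Finset.sum_congr rfl fun i _ => by ring
    linarith

omit [Fintype β] in
/-- From every block lying within a single part one can keep at most the witness of that part; what
is left of a path increases in distance from the root. -/
lemma exists_witness_list {D : β → ℝ} (p wit : β → β) (Bs : List (List β))
    (hB : Bs.Pairwise (fun A B => ∀ a ∈ A, ∀ b ∈ B, D a < D b)) (hnd : Bs.flatten.Nodup) :
    ∃ A : List {u // wit (p u) = u}, (A.map Subtype.val).Sublist Bs.flatten ∧
      A.Pairwise (fun u v : {u // wit (p u) = u} => D u < D v) ∧
      ∀ w : {u // wit (p u) = u}, (∃ B ∈ Bs, w.1 ∈ B ∧ ∀ z ∈ B, p z = p w.1) → w ∈ A := by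
  set f : List β → List β := fun B => B.filter (fun u => wit (p u) = u ∧ ∀ z ∈ B, p z = p u) with hf
  have hmem : ∀ B u, u ∈ f B ↔ u ∈ B ∧ wit (p u) = u ∧ ∀ z ∈ B, p z = p u := by
    intro B u; simp [hf, List.mem_filter]
  have hP : ∀ u ∈ (Bs.map f).flatten, wit (p u) = u := by
    intro u hu
    obtain ⟨l, hl, hul⟩ := List.mem_flatten.1 hu
    obtain ⟨B, _, rfl⟩ := List.mem_map.1 hl
    exact ((hmem B u).1 hul).2.1
  have hval : (((Bs.map f).flatten.attachWith _ hP).map Subtype.val) = (Bs.map f).flatten :=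
    List.attachWith_map_subtype_val _
  refine ⟨(Bs.map f).flatten.attachWith _ hP, ?_, ?_, ?_⟩
  · rw [hval]
    clear hval hP hB hnd
    induction Bs with
    | nil => exact List.Sublist.slnil
    | cons B Bs ih =>
      rw [List.map_cons, List.flatten_cons, List.flatten_cons]
      exact List.filter_sublist.append ih
  · have : ((Bs.map f).flatten).Pairwise (fun u v => D u < D v) := by
      rw [List.pairwise_flatten]
      constructor
      · intro l hl
        obtain ⟨B, hB', rfl⟩ := List.mem_map.1 hl
        have hn : (f B).Nodup := ((List.nodup_flatten.1 hnd).1 B hB').filter _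
        refine List.Pairwise.imp_of_mem ?_ hn
        intro u v hu hv huv
        refine absurd ?_ huv
        obtain ⟨-, hu2, hu3⟩ := (hmem B u).1 hu
        obtain ⟨hv1, hv2, -⟩ := (hmem B v).1 hv
        rw [← hu2, ← hv2, hu3 v hv1]
      · rw [List.pairwise_map]
        refine hB.imp ?_
        intro A B h a ha b hb
        exact h a ((hmem A a).1 ha).1 b ((hmem B b).1 hb).1
    rw [← hval, List.pairwise_map] at this
    exact this
  · rintro ⟨w, hw⟩ ⟨B, hB', hwB, hz⟩
    rw [List.mem_attachWith]
    exact List.mem_flatten.2 ⟨f B, List.mem_map_of_mem hB', (hmem B w).2 ⟨hwB, hw, hz⟩⟩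

/-- The rounding theorem on the nodes other than the root, where `D` is the distance
from the root. Only `D v - D u ≤ c u v` is used about it. -/
lemma exists_rounding {c : β → β → ℝ} {D : β → ℝ} (hsymm : ∀ u v, c u v = c v u)
    (hnn : ∀ u v, 0 ≤ c u v) (htri : ∀ u v w, c u v ≤ c u w + c w v)
    (h₁ : ∀ u v, D v ≤ D u + c u v) (k : ℕ) (hk : 1 ≤ k)
    {m : ℕ} (L : Fin m → List β) (x : Fin m → ℝ) (hx : ∀ i, 0 ≤ x i) (hnd : ∀ i, (L i).Nodup)
    (hcov : ∀ v, 1 ≤ ∑ i, if v ∈ L i then x i else 0) (htot : ∑ i, x i ≤ (k : ℝ) + 1 / 3) :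
    ∃ Q : Fin k → List β, (∀ j, (Q j).Nodup) ∧ (∀ v, ∃ j, v ∈ Q j) ∧
      ∑ j, pathCost (regCost c D) (Q j)
        ≤ (18 * (k : ℝ) + 16) * ∑ i, x i * pathCost (regCost c D) (L i) := by
  have hk' : (1 : ℝ) ≤ k := by exact_mod_cast hk
  have hgnn : ∀ u v, 0 ≤ regCost c D u v := fun u v => by
    have := h₁ u v; unfold regCost; linarith
  have hgtri : ∀ u v w, regCost c D u v ≤ regCost c D u w + regCost c D w v := fun u v w => by
    have := htri u v w; unfold regCost; linarith
  set g := regCost c D with hg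
  set ν := ∑ i, x i * pathCost g (L i) with hν
  have hν0 : 0 ≤ ν := Finset.sum_nonneg fun i _ => mul_nonneg (hx i) (pathCost_nonneg hgnn _)
  -- With this threshold, rescaling by `1 / δ` turns total weight `k + 1/3` into `k + 2/3`.
  set δ : ℝ := ((k : ℝ) + 1 / 3) / ((k : ℝ) + 2 / 3) with hδ
  have hδ0 : 0 < δ := by positivity
  have hδ1 : 1 - δ = 1 / 3 / ((k : ℝ) + 2 / 3) := by
    rw [hδ]; field_simp; ring
  have hδ1' : δ < 1 := by
    have : 0 < 1 - δ := by rw [hδ1]; positivity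
    linarith
  obtain ⟨Bs, p, wit, b, hB1, hB2, hwit, hb0, htour, hbsum⟩ :=
    exists_clusters hsymm hnn h₁ L x hx hcov hδ1'
  -- `A i` consists of the witnesses that path `i` covers by a block inside their part.
  choose A hA1 hA2 hA3 using fun i =>
    exists_witness_list p wit (Bs i) (hB2 i) (by rw [hB1]; exact hnd i)
  have hval : ∀ l : List {u // wit (p u) = u},
      pathCost (fun u v => g u.1 v.1) l = pathCost g (l.map Subtype.val) :=
    fun l => (pathCost_map g Subtype.val l).symm
  obtain ⟨κ, _, y, M, hy0, hM, -, hMcov, hysum, hycost⟩ :=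
    exists_exact_cover (R := fun u v : {u // wit (p u) = u} => D u < D v)
      (g := fun u v => g u.1 v.1) (fun u v => hgnn _ _) (fun u v w => hgtri _ _ _)
      (fun i => x i / δ) (fun i => div_nonneg (hx i) hδ0.le) A hA2
      (by
        intro w
        have h1 := (hwit w.1).2
        rw [w.2] at h1
        have h2 : blockCov Bs x w.1 (fiber p (p w.1)) ≤ ∑ i, if w ∈ A i then x i else 0 := by
          refine Finset.sum_le_sum fun i _ => ?_
          by_cases h : ∃ B ∈ Bs i, w.1 ∈ B ∧ ∀ z ∈ B, z ∈ fiber p (p w.1)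
          · rw [if_pos h, if_pos]
            refine hA3 i w ?_
            simpa only [mem_fiber] using h
          · rw [if_neg h]
            split_ifs
            · exact hx i
            · exact le_rfl
        have h3 : ∑ i, (if w ∈ A i then x i / δ else 0) = (∑ i, if w ∈ A i then x i else 0) / δ := by
          rw [Finset.sum_div]
          exact Finset.sum_congr rfl fun i _ => by split_ifs <;> simp
        have h4 : 1 ≤ ∑ i, (if w ∈ A i then x i / δ else 0) := by
          rw [h3, le_div_iff₀ hδ0]
          linarith
        convert h4)
      Finset.univ
  obtain ⟨Q, hQcov, hQcost, hQsum⟩ :=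
    exists_integral_paths (fun u : {u // wit (p u) = u} => D u) (g := fun u v => g u.1 v.1)
      (fun u v => hgnn _ _) k y hy0 M hM (fun v => hMcov v (Finset.mem_univ v))
      (by
        rw [hysum, ← Finset.sum_div, div_le_iff₀ hδ0, hδ]
        refine htot.trans (le_of_eq ?_)
        field_simp)
  choose t ht1 ht2 ht3 ht4 using fun w : {u // wit (p u) = u} =>
    htour (p w.1) w.1 (mem_fiber.2 rfl)
  -- The detour over a closed tour has the same cost in terms of regret.
  have ht4' : ∀ w, pathCost g (t w) ≤ b (p w.1) := by
    intro w
    have h1 := ht1 w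
    have h2 := ht2 w
    have h4 := ht4 w
    revert h1 h2 h4
    cases t w with
    | nil => simp
    | cons a l =>
      intro h1 h2 h4
      rw [List.head?_cons, Option.some.injEq] at h1
      rw [List.getLast?_cons, Option.some.injEq] at h2
      rw [hg, pathCost_regCost, List.getLastD_eq_getLast?, h2]
      linarith [congrArg D h1]
  refine ⟨fun j => ((Q j).flatMap t).dedup, fun j => List.nodup_dedup _, fun v => ?_, ?_⟩
  · have hw : wit (p (wit (p v))) = wit (p v) := by rw [(hwit v).1]
    obtain ⟨j, hj⟩ := hQcov ⟨wit (p v), hw⟩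
    refine ⟨j, List.mem_dedup.2 (List.mem_flatMap.2 ⟨_, hj, ?_⟩)⟩
    rw [ht3, mem_fiber]
    exact (hwit v).1.symm
  -- The tours are spliced into the paths at the witnesses and repeated nodes are skipped.
  have hfin : ∀ j, pathCost g ((Q j).flatMap t).dedup
      ≤ pathCost (fun u v => g u.1 v.1) (Q j) + ((Q j).map (fun w => b (p w.1))).sum := by
    intro j
    rw [hval]
    exact (pathCost_sublist hgnn hgtri (List.dedup_sublist _)).trans
      (pathCost_flatMap g Subtype.val t _ ht1 ht2 ht4' (Q j))
  have hbW : ∑ w : {u // wit (p u) = u}, b (p w.1) ≤ ∑ ℓ, b ℓ := by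
    have hinj : Function.Injective (fun w : {u // wit (p u) = u} => p w.1) := by
      intro w w' h
      have h' : p w.1 = p w'.1 := h
      exact Subtype.ext (by rw [← w.2, ← w'.2, h'])
    rw [← Finset.sum_image (s := Finset.univ) (g := fun w : {u // wit (p u) = u} => p w.1) (f := b)
      (fun _ _ _ _ h => hinj h)]
    exact Finset.sum_le_univ_sum_of_nonneg hb0
  have hcostA : ∑ i, x i / δ * pathCost (fun u v => g u.1 v.1) (A i) ≤ ν / δ := by
    rw [hν, Finset.sum_div]
    refine Finset.sum_le_sum fun i _ => ?_
    rw [hval, div_mul_eq_mul_div]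
    refine div_le_div_of_nonneg_right (mul_le_mul_of_nonneg_left ?_ (hx i)) hδ0.le
    rw [← hB1 i]
    exact pathCost_sublist hgnn hgtri (hA1 i)
  have h6 : 6 / (1 - δ) = 18 * ((k : ℝ) + 2 / 3) := by
    rw [hδ1]; field_simp; norm_num
  have h3 : ν / δ ≤ 4 / 3 * ν := by
    rw [div_le_iff₀ hδ0, hδ]
    have : (3 : ℝ) / 4 ≤ δ := by
      rw [hδ, div_le_div_iff₀ (by norm_num) (by positivity)]; linarith
    nlinarith
  calc ∑ j, pathCost g ((Q j).flatMap t).dedup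
      ≤ ∑ j, (pathCost (fun u v => g u.1 v.1) (Q j) + ((Q j).map (fun w => b (p w.1))).sum) :=
        Finset.sum_le_sum fun j _ => hfin j
    _ = ∑ j, pathCost (fun u v => g u.1 v.1) (Q j) + ∑ w : {u // wit (p u) = u}, b (p w.1) := by
        rw [Finset.sum_add_distrib, hQsum]
    _ ≤ 4 * ν + 18 * ((k : ℝ) + 2 / 3) * ν := by
        rw [h6] at hbsum
        linarith
    _ = (18 * (k : ℝ) + 16) * ν := by ring

end Rounding

/-! ### Paths from the root -/

/-- The regret of a rooted path is the regret cost of the list of its non-root nodes: the step out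
of the root has regret zero. -/
lemma pathRegret_eq {α : Type*} (c : α → α → ℝ) (r : α) (hrefl : c r r = 0)
    (l : List {v // v ≠ r}) :
    pathRegret c r (r :: l.map Subtype.val)
      = pathCost (regCost (fun u v : {v // v ≠ r} => c u v) (fun v => c r v)) l := by
  cases l with
  | nil => simp [pathRegret, pathCost, hrefl]
  | cons a l =>
    have h : ∀ (l : List {v // v ≠ r}) (a : {v // v ≠ r}),
        (l.map Subtype.val).getLastD a.1 = (l.getLastD a).1 := by
      intro l
      induction l with
      | nil => intro a; rfl
      | cons b l ih =>
        intro a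
        rw [List.map_cons, List.getLastD_cons, List.getLastD_cons, ih]
    rw [pathRegret, List.map_cons, pathCost_cons_cons, List.getLastD_cons, List.getLastD_cons, h,
      pathCost_regCost, ← List.map_cons, pathCost_map]
    ring

lemma exists_tail_list {α : Type*} (r : α) (w : List α) (hw : IsRootedPath r w) :
    ∃ l : List {v // v ≠ r}, w = r :: l.map Subtype.val ∧ l.Nodup := by
  obtain ⟨h1, h2⟩ := hw
  obtain ⟨s, rfl⟩ := List.head?_eq_some_iff.1 h1
  obtain ⟨h3, h4⟩ := List.nodup_cons.1 h2
  have hP : ∀ v ∈ s, v ≠ r := fun v hv h => h3 (h ▸ hv)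
  have hs : (s.attachWith _ hP).map Subtype.val = s := List.attachWith_map_subtype_val _
  refine ⟨s.attachWith _ hP, by rw [hs], List.Nodup.of_map Subtype.val ?_⟩
  rw [hs]
  exact h4

/-- let `k ≥ 1` and let `x` assign nonnegative values to rooted paths with
`Σ_{P ∋ v} x_P ≥ 1` for every `v ∈ V` and `Σ_P x_P ≤ k + 1/3`.  With `ν = Σ_P c^reg(P)·x_P`,
there exist at most `k` rooted paths covering all of `V` whose total regret is at most
`(18k + 16)·ν`. -/
theorem minsum_krvrp_rounding {α : Type*} [Fintype α] [DecidableEq α]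
    (c : α → α → ℝ) (r : α)
    (hsymm : ∀ u v, c u v = c v u) (hnn : ∀ u v, 0 ≤ c u v)
    (htri : ∀ u v w, c u v ≤ c u w + c w v) (hrefl : ∀ u, c u u = 0)
    (hpos : ∀ u v, u ≠ v → 0 < c u v)
    (k : ℕ) (hk : 1 ≤ k)
    (m : ℕ) (P : Fin m → List α) (x : Fin m → ℝ)
    (hpath : ∀ i, IsRootedPath r (P i))
    (hx : ∀ i, 0 ≤ x i)
    (hcov : ∀ v, v ≠ r → 1 ≤ ∑ i ∈ Finset.univ.filter (fun i => v ∈ (P i).tail), x i)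
    (hval : ∑ i, x i ≤ (k : ℝ) + 1/3) :
    ∃ (n : ℕ) (Q : Fin n → List α),
      n ≤ k ∧
      (∀ j, IsRootedPath r (Q j)) ∧
      (∀ v, v ≠ r → ∃ j, v ∈ (Q j).tail) ∧
      ∑ j, pathRegret c r (Q j)
        ≤ (18 * (k : ℝ) + 16) * (∑ i, pathRegret c r (P i) * x i) := by
  classical
  set c' : {v // v ≠ r} → {v // v ≠ r} → ℝ := fun u v => c u v with hc'
  set D : {v // v ≠ r} → ℝ := fun v => c r v with hD
  have hreg := pathRegret_eq c r (hrefl r)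
  choose L hL hLnd using fun i => exists_tail_list r (P i) (hpath i)
  have hmem : ∀ i (v : {v // v ≠ r}), v ∈ L i ↔ v.1 ∈ (P i).tail := by
    intro i v
    rw [hL i, List.tail_cons, List.mem_map]
    constructor
    · exact fun h => ⟨v, h, rfl⟩
    · rintro ⟨u, hu, huv⟩
      exact Subtype.ext huv ▸ hu
  obtain ⟨Q, hQ1, hQ2, hQ3⟩ := exists_rounding (c := c') (D := D) (fun u v => hsymm _ _)
    (fun u v => hnn _ _) (fun u v w => htri _ _ _) (fun u v => htri _ _ _) k hk L x hx hLnd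
    (by
      intro v
      refine (hcov v v.2).trans (le_of_eq ?_)
      rw [Finset.sum_filter]
      exact Finset.sum_congr rfl fun i _ => by simp only [hmem])
    hval
  refine ⟨k, fun j => r :: (Q j).map Subtype.val, le_rfl, fun j => ⟨rfl, ?_⟩, ?_, ?_⟩
  · rw [List.nodup_cons]
    refine ⟨?_, (hQ1 j).map Subtype.val_injective⟩
    intro h
    obtain ⟨u, _, hu⟩ := List.mem_map.1 h
    exact u.2 hu
  · intro v hv
    obtain ⟨j, hj⟩ := hQ2 ⟨v, hv⟩
    exact ⟨j, List.mem_map.2 ⟨⟨v, hv⟩, hj, rfl⟩⟩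
  · have h1 : ∀ i, pathRegret c r (P i) * x i = x i * pathCost (regCost c' D) (L i) := by
      intro i
      rw [hL i, hreg, mul_comm]
    simp only [h1, hreg]
    exact hQ3
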